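/- Under the stated hypotheses, if ‖V‖ < (√3/2)·d (equivalently, δ_V < d/2), then the spectrum of B in the open d/2-neighborhood O_{d/2}(σ) of σ is separated from the remainder of the spectrum of B; more precisely, spec(B) ∩ O_{d/2}(σ) = spec(B) ∩ U_{δ_V}(σ) and this set is nonempty and closed, where U_{δ_V}(σ) is the closed δ_V-neighborhood of σ. -/

import Mathlib

/-- `E` is the projection-valued spectral measure of the bounded self-adjoint operator `T`
on the complex Hilbert space `H`: each `E Δ` (for Borel `Δ ⊆ ℝ`) is an orthogonal
projection, `E` is multiplicative and countably additive (in the strong sense), `E ℝ = 1`,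
each `E Δ` commutes with `T`, and on the range of `E Δ` the operator `T` has its
approximate point spectrum inside the closure of `Δ` (which uniquely characterizes the
spectral measure of `T`). -/
structure IsSpectralMeasure {H : Type*} [NormedAddCommGroup H] [InnerProductSpace ℂ H]
    [CompleteSpace H] (T : H →L[ℂ] H) (E : Set ℝ → H →L[ℂ] H) : Prop where
  isSelfAdjoint : ∀ Δ : Set ℝ, MeasurableSet Δ → IsSelfAdjoint (E Δ)
  map_inter : ∀ Δ₁ Δ₂ : Set ℝ, MeasurableSet Δ₁ → MeasurableSet Δ₂ →
    E Δ₁ * E Δ₂ = E (Δ₁ ∩ Δ₂)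
  map_univ : E Set.univ = 1
  countably_additive : ∀ Δ : ℕ → Set ℝ, (∀ n, MeasurableSet (Δ n)) →
    Pairwise (Function.onFun Disjoint Δ) →
    ∀ x : H, HasSum (fun n => E (Δ n) x) (E (⋃ n, Δ n) x)
  commutes : ∀ Δ : Set ℝ, MeasurableSet Δ → Commute T (E Δ)
  spectrum_loc : ∀ Δ : Set ℝ, MeasurableSet Δ → ∀ x : H, E Δ x = x →
    ∀ μ : ℝ, Metric.infDist μ Δ * ‖x‖ ≤ ‖T x - (μ : ℂ) • x‖

open scoped InnerProductSpace

section

variable {H : Type*} [NormedAddCommGroup H] [InnerProductSpace ℂ H]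

/-- A vector `y` whose translates `y + n x` have norm at least `n ‖x‖` for all `n > 0` satisfies
`0 ≤ Re ⟪x, y⟫`. -/
lemma re_inner_nonneg_of_forall_mul_norm_le {x y : H}
    (h : ∀ n : ℝ, 0 < n → n * ‖x‖ ≤ ‖y + (n : ℂ) • x‖) : 0 ≤ (⟪x, y⟫_ℂ).re := by
  have key : ∀ n : ℝ, 0 < n → 0 ≤ ‖y‖ ^ 2 + 2 * n * (⟪x, y⟫_ℂ).re := by
    intro n hn
    have h1 := pow_le_pow_left₀ (by positivity) (h n hn) 2
    have h2 : ‖y + (n : ℂ) • x‖ ^ 2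
        = ‖y‖ ^ 2 + 2 * (n * (⟪x, y⟫_ℂ).re) + (n * ‖x‖) ^ 2 := by
      rw [norm_add_sq (𝕜 := ℂ), inner_smul_right, norm_smul, Complex.norm_real,
        Real.norm_of_nonneg hn.le, RCLike.re_eq_complex_re, Complex.re_ofReal_mul,
        ← inner_conj_symm, Complex.conj_re]
    linarith
  by_contra! hr
  have h1 := key ((‖y‖ ^ 2 + 1) / (-2 * (⟪x, y⟫_ℂ).re)) (div_pos (by positivity) (by linarith))
  have h2 : 2 * ((‖y‖ ^ 2 + 1) / (-2 * (⟪x, y⟫_ℂ).re)) * (⟪x, y⟫_ℂ).re = -(‖y‖ ^ 2 + 1) := by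
    have := hr.ne
    field_simp
  linarith

/-- A self-adjoint operator whose quadratic form is bounded by `ε` on an invariant subspace satisfies
`‖S x‖ ≤ ε ‖x‖` there. -/
lemma norm_le_of_abs_re_inner_le [CompleteSpace H] {S : H →L[ℂ] H} (hS : IsSelfAdjoint S)
    {K : Submodule ℂ H} (hK : ∀ x ∈ K, S x ∈ K) {ε : ℝ} (hε : 0 < ε)
    (h : ∀ x ∈ K, |(⟪x, S x⟫_ℂ).re| ≤ ε * ‖x‖ ^ 2) {x : H} (hx : x ∈ K) : ‖S x‖ ≤ ε * ‖x‖ := by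
  have hy : ((ε⁻¹ : ℝ) : ℂ) • S x ∈ K := K.smul_mem _ (hK x hx)
  set y := ((ε⁻¹ : ℝ) : ℂ) • S x with hydef
  have h1 := (abs_le.1 (h _ (K.add_mem hx hy))).2
  have h2 := (abs_le.1 (h _ (K.sub_mem hx hy))).1
  have hpar := parallelogram_law_with_norm ℂ x y
  have hxy : (⟪x, S y⟫_ℂ).re = ε⁻¹ * ‖S x‖ ^ 2 := by
    rw [show ⟪x, S y⟫_ℂ = ⟪S x, y⟫_ℂ from (hS.isSymmetric x y).symm, hydef, inner_smul_right, Complex.re_ofReal_mul]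
    congr 1
    exact inner_self_eq_norm_sq (𝕜 := ℂ) (S x)
  have hyx : (⟪y, S x⟫_ℂ).re = ε⁻¹ * ‖S x‖ ^ 2 := by
    rw [← hxy, show ⟪x, S y⟫_ℂ = ⟪S x, y⟫_ℂ from (hS.isSymmetric x y).symm, ← inner_conj_symm, Complex.conj_re]
  have hyn : ‖y‖ ^ 2 = ε⁻¹ ^ 2 * ‖S x‖ ^ 2 := by
    rw [hydef, norm_smul, Complex.norm_real, Real.norm_of_nonneg (by positivity), mul_pow]
  simp only [map_add, map_sub, inner_add_left, inner_add_right, inner_sub_left, inner_sub_right,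
    Complex.add_re, Complex.sub_re, hxy, hyx] at h1 h2
  have h3 : 4 * (ε⁻¹ * ‖S x‖ ^ 2) ≤ ε * (2 * (‖x‖ ^ 2 + ε⁻¹ ^ 2 * ‖S x‖ ^ 2)) := by
    rw [← hyn, ← hpar]
    linarith
  have h4 : ε * (ε⁻¹ ^ 2 * ‖S x‖ ^ 2) = ε⁻¹ * ‖S x‖ ^ 2 := by field_simp
  have h5 : ε⁻¹ * ‖S x‖ ^ 2 ≤ ε * ‖x‖ ^ 2 := by linarith
  rw [inv_mul_le_iff₀ hε] at h5
  exact (pow_le_pow_iff_left₀ (norm_nonneg _) (by positivity) two_ne_zero).1 (by linarith)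

end

namespace IsSpectralMeasure

variable {H : Type*} [NormedAddCommGroup H] [InnerProductSpace ℂ H] [CompleteSpace H]
  {T : H →L[ℂ] H} {E : Set ℝ → H →L[ℂ] H}

lemma map_empty (hE : IsSpectralMeasure T E) : E ∅ = 0 := by
  ext x
  have h := hE.countably_additive (fun _ => ∅) (fun _ => MeasurableSet.empty)
    (fun _ _ _ => disjoint_bot_left) x
  simpa using tendsto_nhds_unique tendsto_const_nhds h.summable.tendsto_atTop_zero

lemma apply_apply (hE : IsSpectralMeasure T E) {Δ₁ Δ₂ : Set ℝ} (h₁ : MeasurableSet Δ₁)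
    (h₂ : MeasurableSet Δ₂) (x : H) : E Δ₁ (E Δ₂ x) = E (Δ₁ ∩ Δ₂) x := by
  rw [← hE.map_inter Δ₁ Δ₂ h₁ h₂, mul_apply_eq_comp]

lemma apply_apply_of_subset (hE : IsSpectralMeasure T E) {Δ₁ Δ₂ : Set ℝ} (h₁ : MeasurableSet Δ₁)
    (h₂ : MeasurableSet Δ₂) (h : Δ₂ ⊆ Δ₁) (x : H) : E Δ₁ (E Δ₂ x) = E Δ₂ x := by
  rw [hE.apply_apply h₁ h₂, Set.inter_eq_right.2 h]

lemma apply_map (hE : IsSpectralMeasure T E) {Δ : Set ℝ} (hΔ : MeasurableSet Δ) {x : H}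
    (hx : E Δ x = x) : E Δ (T x) = T x := by
  have h := congrArg (fun S : H →L[ℂ] H => S x) (hE.commutes Δ hΔ)
  simp only [mul_apply_eq_comp, hx] at h
  exact h.symm

lemma map_union (hE : IsSpectralMeasure T E) {Δ₁ Δ₂ : Set ℝ} (h₁ : MeasurableSet Δ₁)
    (h₂ : MeasurableSet Δ₂) (hd : Disjoint Δ₁ Δ₂) : E (Δ₁ ∪ Δ₂) = E Δ₁ + E Δ₂ := by
  ext x
  let f : ℕ → Set ℝ := fun n => if n = 0 then Δ₁ else if n = 1 then Δ₂ else ∅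
  have hf : ∀ n, MeasurableSet (f n) := by
    intro n
    simp only [f]
    split_ifs <;> simp [h₁, h₂]
  have hfd : Pairwise (Function.onFun Disjoint f) := by
    intro m n hmn
    simp only [f, Function.onFun]
    split_ifs <;> simp_all [disjoint_comm]
  have hU : ⋃ n, f n = Δ₁ ∪ Δ₂ := by
    ext t
    simp only [Set.mem_iUnion, Set.mem_union, f]
    constructor
    · rintro ⟨n, hn⟩
      split_ifs at hn <;> simp_all
    · rintro (h | h)
      exacts [⟨0, by simpa using h⟩, ⟨1, by simpa using h⟩]
  have hs := hE.countably_additive f hf hfd x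
  rw [hU] at hs
  have hs' : HasSum (fun n => E (f n) x) (∑ n ∈ Finset.range 2, E (f n) x) := by
    refine hasSum_sum_of_ne_finset_zero fun n hn => ?_
    have hn2 : 1 < n := by simpa using hn
    have : f n = ∅ := by simp [f, show n ≠ 0 by omega, show n ≠ 1 by omega]
    simp [this, hE.map_empty]
  simpa [Finset.sum_range_succ, f] using hs.unique hs'

/-- The null sets of a spectral measure are stable under countable unions. -/
lemma map_iUnion_eq_zero (hE : IsSpectralMeasure T E) {Δ : ℕ → Set ℝ}
    (hΔ : ∀ n, MeasurableSet (Δ n)) (h0 : ∀ n, E (Δ n) = 0) : E (⋃ n, Δ n) = 0 := by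
  ext x
  have hm : ∀ n, MeasurableSet (disjointed Δ n) := MeasurableSet.disjointed hΔ
  have hs := hE.countably_additive (disjointed Δ) hm (disjoint_disjointed Δ) x
  have hz : ∀ n, E (disjointed Δ n) x = 0 := by
    intro n
    rw [← Set.inter_eq_left.2 (disjointed_subset Δ n), ← hE.apply_apply (hm n) (hΔ n), h0 n]
    simp
  rw [iUnion_disjointed] at hs
  simp only [hz] at hs
  exact hs.unique hasSum_zero

lemma map_eq_zero_of_subset (hE : IsSpectralMeasure T E) {Δ₁ Δ₂ : Set ℝ} (h₁ : MeasurableSet Δ₁)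
    (h₂ : MeasurableSet Δ₂) (h : Δ₁ ⊆ Δ₂) (h0 : E Δ₂ = 0) : E Δ₁ = 0 := by
  rw [← Set.inter_eq_left.2 h, ← hE.map_inter Δ₁ Δ₂ h₁ h₂, h0, mul_zero]

lemma inner_eq_zero (hE : IsSpectralMeasure T E) {Δ₁ Δ₂ : Set ℝ} (h₁ : MeasurableSet Δ₁)
    (h₂ : MeasurableSet Δ₂) (hd : Disjoint Δ₁ Δ₂) {x y : H} (hx : E Δ₁ x = x) (hy : E Δ₂ y = y) :
    ⟪x, y⟫_ℂ = 0 := by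
  have h : ⟪E Δ₁ x, y⟫_ℂ = ⟪x, E Δ₁ y⟫_ℂ := (hE.isSelfAdjoint Δ₁ h₁).isSymmetric x y
  rw [hx, ← hy, hE.apply_apply h₁ h₂, hd.inter_eq, hE.map_empty] at h
  rw [← hy, h]
  simp

/-- The operator is bounded below by `m` on the range of `E Δ` when `Δ ⊆ [m, ∞)`. -/
lemma mul_le_re_inner (hE : IsSpectralMeasure T E) {Δ : Set ℝ} (hΔ : MeasurableSet Δ) {m : ℝ}
    (hm : ∀ μ ∈ Δ, m ≤ μ) {x : H} (hx : E Δ x = x) : m * ‖x‖ ^ 2 ≤ (⟪x, T x⟫_ℂ).re := by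
  rcases Δ.eq_empty_or_nonempty with rfl | hne
  · have hx0 : x = 0 := by rw [← hx, hE.map_empty, zero_apply]
    simp [hx0]
  have h : 0 ≤ (⟪x, T x - (m : ℂ) • x⟫_ℂ).re := by
    refine re_inner_nonneg_of_forall_mul_norm_le fun n hn => ?_
    have hdist : n ≤ Metric.infDist (m - n) Δ :=
      (Metric.le_infDist hne).2 fun y hy => by
        rw [Real.dist_eq, abs_sub_comm]
        exact le_trans (by linarith [hm y hy]) (le_abs_self _)
    calc n * ‖x‖ ≤ Metric.infDist (m - n) Δ * ‖x‖ := by gcongr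
      _ ≤ ‖T x - ((m - n : ℝ) : ℂ) • x‖ := hE.spectrum_loc Δ hΔ x hx _
      _ = _ := by congr 1; push_cast; module
  rw [inner_sub_right, inner_smul_right, Complex.sub_re, Complex.re_ofReal_mul] at h
  have : (⟪x, x⟫_ℂ).re = ‖x‖ ^ 2 := inner_self_eq_norm_sq (𝕜 := ℂ) x
  rw [this] at h
  linarith

/-- The operator is bounded above by `m` on the range of `E Δ` when `Δ ⊆ (-∞, m]`. -/
lemma re_inner_le_mul (hE : IsSpectralMeasure T E) {Δ : Set ℝ} (hΔ : MeasurableSet Δ) {m : ℝ}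
    (hm : ∀ μ ∈ Δ, μ ≤ m) {x : H} (hx : E Δ x = x) : (⟪x, T x⟫_ℂ).re ≤ m * ‖x‖ ^ 2 := by
  rcases Δ.eq_empty_or_nonempty with rfl | hne
  · have hx0 : x = 0 := by rw [← hx, hE.map_empty, zero_apply]
    simp [hx0]
  have h : 0 ≤ (⟪x, (m : ℂ) • x - T x⟫_ℂ).re := by
    refine re_inner_nonneg_of_forall_mul_norm_le fun n hn => ?_
    have hdist : n ≤ Metric.infDist (m + n) Δ :=
      (Metric.le_infDist hne).2 fun y hy => by
        rw [Real.dist_eq]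
        exact le_trans (by linarith [hm y hy]) (le_abs_self _)
    calc n * ‖x‖ ≤ Metric.infDist (m + n) Δ * ‖x‖ := by gcongr
      _ ≤ ‖T x - ((m + n : ℝ) : ℂ) • x‖ := hE.spectrum_loc Δ hΔ x hx _
      _ = _ := by rw [← norm_neg]; congr 1; push_cast; module
  rw [inner_sub_right, inner_smul_right, Complex.sub_re, Complex.re_ofReal_mul] at h
  have : (⟪x, x⟫_ℂ).re = ‖x‖ ^ 2 := inner_self_eq_norm_sq (𝕜 := ℂ) x
  rw [this] at h
  linarith

/-- Every point of the resolvent set has a closed ball around it which is a null set. -/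
lemma exists_map_closedBall_eq_zero (hE : IsSpectralMeasure T E) (hT : IsSelfAdjoint T) {μ : ℝ}
    (hμ : μ ∉ spectrum ℝ T) : ∃ ε > 0, E (Metric.closedBall μ ε) = 0 := by
  obtain ⟨u, hu⟩ := spectrum.notMem_iff.1 hμ
  set S : H →L[ℂ] H := T - algebraMap ℝ (H →L[ℂ] H) μ with hSdef
  have hSx : ∀ x, S x = T x - (μ : ℂ) • x := fun x => by
    simp [hSdef, Algebra.algebraMap_eq_smul_one]
  have hS : IsSelfAdjoint S := hT.sub (IsSelfAdjoint.algebraMap _ (IsSelfAdjoint.all μ))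
  have hlow : ∀ x, ‖x‖ ≤ ‖(↑u⁻¹ : H →L[ℂ] H)‖ * ‖S x‖ := by
    intro x
    have h1 : (↑u⁻¹ : H →L[ℂ] H) (-(S x)) = x := by
      have h2 : (↑u⁻¹ * ↑u : H →L[ℂ] H) x = x := by simp
      rw [hu, mul_apply_eq_comp] at h2
      convert h2 using 2
      simp [hSdef]
    calc ‖x‖ = ‖(↑u⁻¹ : H →L[ℂ] H) (-(S x))‖ := by rw [h1]
      _ ≤ ‖(↑u⁻¹ : H →L[ℂ] H)‖ * ‖-(S x)‖ := ContinuousLinearMap.le_opNorm _ _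
      _ = _ := by rw [norm_neg]
  set C := ‖(↑u⁻¹ : H →L[ℂ] H)‖
  have hC : 0 ≤ C := norm_nonneg _
  have hε : 0 < (C + 1)⁻¹ := by positivity
  refine ⟨(C + 1)⁻¹, hε, ?_⟩
  have hΔ : MeasurableSet (Metric.closedBall μ (C + 1)⁻¹) := measurableSet_closedBall
  let K : Submodule ℂ H := LinearMap.eqLocus (E (Metric.closedBall μ (C + 1)⁻¹)).toLinearMap
    LinearMap.id
  have hK : ∀ x, x ∈ K ↔ E (Metric.closedBall μ (C + 1)⁻¹) x = x := fun x => Iff.rfl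
  have hKS : ∀ x ∈ K, S x ∈ K := by
    intro x hx
    rw [hSx]
    exact K.sub_mem ((hK _).2 (hE.apply_map hΔ hx)) (K.smul_mem _ hx)
  have hb : ∀ x ∈ K, |(⟪x, S x⟫_ℂ).re| ≤ (C + 1)⁻¹ * ‖x‖ ^ 2 := by
    intro x hx
    have h1 := hE.mul_le_re_inner hΔ (m := μ - (C + 1)⁻¹) (x := x)
      (fun t ht => by rw [Real.closedBall_eq_Icc] at ht; exact ht.1) hx
    have h2 := hE.re_inner_le_mul hΔ (m := μ + (C + 1)⁻¹) (x := x)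
      (fun t ht => by rw [Real.closedBall_eq_Icc] at ht; exact ht.2) hx
    have h3 : (⟪x, x⟫_ℂ).re = ‖x‖ ^ 2 := inner_self_eq_norm_sq (𝕜 := ℂ) x
    rw [hSx, inner_sub_right, inner_smul_right, Complex.sub_re, Complex.re_ofReal_mul, h3, abs_le]
    constructor <;> linarith
  ext x
  have hx : E (Metric.closedBall μ (C + 1)⁻¹) x ∈ K :=
    (hK _).2 (hE.apply_apply_of_subset hΔ hΔ subset_rfl x)
  set y := E (Metric.closedBall μ (C + 1)⁻¹) x
  have h1 := norm_le_of_abs_re_inner_le hS hKS hε hb hx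
  rw [inv_mul_eq_div, le_div_iff₀ (by positivity)] at h1
  have h2 := hlow y
  have h3 : ‖S y‖ ≤ 0 := by linarith
  have h4 : ‖y‖ ≤ 0 := h2.trans (mul_nonpos_of_nonneg_of_nonpos hC h3)
  simpa using h4

lemma map_spectrum (hE : IsSpectralMeasure T E) (hT : IsSelfAdjoint T) :
    E (spectrum ℝ T) = 1 := by
  have hm : MeasurableSet (spectrum ℝ T) := (spectrum.isClosed T).measurableSet
  have h0 : E (spectrum ℝ T)ᶜ = 0 := by
    choose! ε hε hε0 using fun μ (hμ : μ ∉ spectrum ℝ T) =>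
      hE.exists_map_closedBall_eq_zero hT hμ
    obtain ⟨t, hts, htc, htU⟩ := TopologicalSpace.countable_cover_nhdsWithin
      (f := fun μ => Metric.closedBall μ (ε μ)) (s := (spectrum ℝ T)ᶜ)
      fun μ hμ => mem_nhdsWithin_of_mem_nhds (Metric.closedBall_mem_nhds μ (hε μ hμ))
    rcases t.eq_empty_or_nonempty with rfl | hne
    · have : (spectrum ℝ T)ᶜ = ∅ := by simpa using htU
      rw [this, hE.map_empty]
    obtain ⟨g, rfl⟩ := htc.exists_eq_range hne
    rw [Set.biUnion_range] at htU
    exact hE.map_eq_zero_of_subset hm.compl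
      (MeasurableSet.iUnion fun n => measurableSet_closedBall) htU
      (hE.map_iUnion_eq_zero (fun n => measurableSet_closedBall)
        fun n => hε0 _ (hts (Set.mem_range_self n)))
  have h := hE.map_union hm hm.compl disjoint_compl_right
  rw [Set.union_compl_self, hE.map_univ, h0, add_zero] at h
  exact h.symm

end IsSpectralMeasure

section

variable {H : Type*} [NormedAddCommGroup H] [InnerProductSpace ℂ H]

/-- Lower bound for the quadratic form of a `2 × 2` block operator with diagonal blocks bounded
below by `α` and `β` and off-diagonal part `W` with `‖W‖² ≤ (α - c) (β - c)`. -/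
lemma mul_le_re_inner_add_of_offDiagonal {S W : H →L[ℂ] H} {p q : H} {α β c : ℝ}
    (hp : α * ‖p‖ ^ 2 ≤ (⟪p, S p⟫_ℂ).re) (hq : β * ‖q‖ ^ 2 ≤ (⟪q, S q⟫_ℂ).re)
    (hSpq : ⟪p, S q⟫_ℂ = 0) (hSqp : ⟪q, S p⟫_ℂ = 0) (hWp : ⟪p, W p⟫_ℂ = 0)
    (hWq : ⟪q, W q⟫_ℂ = 0) (hpq : ⟪p, q⟫_ℂ = 0) (hα : c ≤ α) (hβ : c ≤ β)
    (hW : ‖W‖ ^ 2 ≤ (α - c) * (β - c)) :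
    c * ‖p + q‖ ^ 2 ≤ (⟪p + q, (S + W) (p + q)⟫_ℂ).re := by
  have h1 : |(⟪p, W q⟫_ℂ).re| ≤ ‖W‖ * (‖p‖ * ‖q‖) :=
    calc |(⟪p, W q⟫_ℂ).re| ≤ ‖⟪p, W q⟫_ℂ‖ := Complex.abs_re_le_norm _
      _ ≤ ‖p‖ * ‖W q‖ := norm_inner_le_norm _ _
      _ ≤ ‖p‖ * (‖W‖ * ‖q‖) := by gcongr; exact W.le_opNorm q
      _ = _ := by ring
  have h2 : |(⟪q, W p⟫_ℂ).re| ≤ ‖W‖ * (‖p‖ * ‖q‖) :=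
    calc |(⟪q, W p⟫_ℂ).re| ≤ ‖⟪q, W p⟫_ℂ‖ := Complex.abs_re_le_norm _
      _ ≤ ‖q‖ * ‖W p‖ := norm_inner_le_norm _ _
      _ ≤ ‖q‖ * (‖W‖ * ‖p‖) := by gcongr; exact W.le_opNorm p
      _ = _ := by ring
  have h3 : ‖p + q‖ ^ 2 = ‖p‖ ^ 2 + ‖q‖ ^ 2 := by
    rw [norm_add_sq (𝕜 := ℂ), hpq]
    simp
  have h4 : 2 * (‖W‖ * (‖p‖ * ‖q‖)) ≤ (α - c) * ‖p‖ ^ 2 + (β - c) * ‖q‖ ^ 2 := by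
    have ha : 0 ≤ (α - c) * ‖p‖ ^ 2 := mul_nonneg (by linarith) (by positivity)
    have hb : 0 ≤ (β - c) * ‖q‖ ^ 2 := mul_nonneg (by linarith) (by positivity)
    refine (pow_le_pow_iff_left₀ (by positivity) (add_nonneg ha hb) two_ne_zero).1 ?_
    have h5 := mul_le_mul_of_nonneg_right hW (show 0 ≤ ‖p‖ ^ 2 * ‖q‖ ^ 2 by positivity)
    nlinarith [sq_nonneg ((α - c) * ‖p‖ ^ 2 - (β - c) * ‖q‖ ^ 2)]
  have h5 := (abs_le.1 h1).1
  have h6 := (abs_le.1 h2).1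
  simp only [add_apply, map_add, inner_add_left, inner_add_right, hSpq, hSqp,
    hWp, hWq, Complex.add_re, Complex.zero_re, h3]
  linarith

end

/-- Points of two sets at distance at least `d` from each other, all at distance at least `b`
to the right of `l`: one of the sets stays at distance `b + d` to the right of `l`. -/
lemma exists_gap_right {σ τ : Set ℝ} {d b l : ℝ}
    (hdist : ∀ p ∈ σ, ∀ q ∈ τ, d ≤ dist p q)
    (hσ : ∀ p ∈ σ, l + b ≤ p) (hτ : ∀ q ∈ τ, l + b ≤ q) :
    ∃ α β, (α = b ∧ β = b + d ∨ α = b + d ∧ β = b) ∧ (∀ p ∈ σ, l + α ≤ p) ∧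
      ∀ q ∈ τ, l + β ≤ q := by
  by_cases h : ∀ p ∈ σ, l + (b + d) ≤ p
  · exact ⟨b + d, b, Or.inr ⟨rfl, rfl⟩, h, hτ⟩
  · push Not at h
    obtain ⟨p, hp, hpl⟩ := h
    refine ⟨b, b + d, Or.inl ⟨rfl, rfl⟩, hσ, fun q hq => ?_⟩
    have h1 := hdist p hp q hq
    rw [Real.dist_eq] at h1
    rcases abs_cases (p - q) with ⟨h2, _⟩ | ⟨h2, _⟩ <;> linarith [hσ p hp, hτ q hq]

lemma exists_gap_left {σ τ : Set ℝ} {d b l : ℝ}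
    (hdist : ∀ p ∈ σ, ∀ q ∈ τ, d ≤ dist p q)
    (hσ : ∀ p ∈ σ, p ≤ l - b) (hτ : ∀ q ∈ τ, q ≤ l - b) :
    ∃ α β, (α = b ∧ β = b + d ∨ α = b + d ∧ β = b) ∧ (∀ p ∈ σ, p ≤ l - α) ∧
      ∀ q ∈ τ, q ≤ l - β := by
  by_cases h : ∀ p ∈ σ, p ≤ l - (b + d)
  · exact ⟨b + d, b, Or.inr ⟨rfl, rfl⟩, h, hτ⟩
  · push Not at h
    obtain ⟨p, hp, hpl⟩ := h
    refine ⟨b, b + d, Or.inl ⟨rfl, rfl⟩, hσ, fun q hq => ?_⟩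
    have h1 := hdist p hp q hq
    rw [Real.dist_eq] at h1
    rcases abs_cases (p - q) with ⟨h2, _⟩ | ⟨h2, _⟩ <;> linarith [hσ p hp, hτ q hq]

lemma exists_pos_sq_le_of_lt {b d v : ℝ} (hb : 0 < b) (hd : 0 < d) (h : v ^ 2 < b * (b + d)) :
    ∃ c, 0 < c ∧ c ≤ b ∧ v ^ 2 ≤ (b - c) * (b + d - c) := by
  have hbd : 0 < 2 * b + d := by linarith
  refine ⟨(b * (b + d) - v ^ 2) / (2 * b + d), div_pos (by linarith) hbd, ?_, ?_⟩
  · rw [div_le_iff₀ hbd]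
    nlinarith [sq_nonneg v]
  · set c := (b * (b + d) - v ^ 2) / (2 * b + d) with hc
    have : c * (2 * b + d) = b * (b + d) - v ^ 2 := by rw [hc]; field_simp
    nlinarith [sq_nonneg c]

/-- Off-diagonal perturbations move the spectrum by at most `δ`, where `δ (δ + d) = v²` and `v`
bounds the norm of the perturbation. -/
theorem spectrum_add_subset_cthickening {H : Type*} [NormedAddCommGroup H]
    [InnerProductSpace ℂ H] [CompleteSpace H] {A W : H →L[ℂ] H} {E : Set ℝ → H →L[ℂ] H}
    (hA : IsSelfAdjoint A) (hW : IsSelfAdjoint W) (hE : IsSpectralMeasure A E) {σ τ : Set ℝ}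
    (hσ : IsClosed σ) (hτ : IsClosed τ) (hne : (σ ∪ τ).Nonempty) (hspec : spectrum ℝ A = σ ∪ τ)
    {d : ℝ} (hd : 0 < d) (hdist : ∀ p ∈ σ, ∀ q ∈ τ, d ≤ dist p q)
    (hWσ : E σ * W * E σ = 0) (hWτ : E τ * W * E τ = 0) {δ v : ℝ} (hδ : 0 ≤ δ)
    (hδv : δ * (δ + d) = v ^ 2) (hWv : ‖W‖ ≤ v) :
    spectrum ℝ (A + W) ⊆ Metric.cthickening δ (σ ∪ τ) := by
  intro l hl
  by_contra hlδ
  obtain ⟨y, hy, hby⟩ := (hσ.union hτ).exists_infDist_eq_dist hne l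
  set b := Metric.infDist l (σ ∪ τ) with hbdef
  have hδb : δ < b := by
    by_contra! h
    exact hlδ (Metric.mem_cthickening_of_dist_le l y δ _ hy (hby ▸ h))
  have hb : 0 < b := hδ.trans_lt hδb
  obtain ⟨c, hc0, hcb, hcv⟩ := exists_pos_sq_le_of_lt hb hd (v := v)
    (by rw [← hδv]; exact mul_lt_mul'' hδb (by linarith) hδ (by linarith))
  have hWc : ‖W‖ ^ 2 ≤ (b - c) * (b + d - c) :=
    (pow_le_pow_left₀ (norm_nonneg _) hWv 2).trans hcv
  have hdisj : Disjoint σ τ := Set.disjoint_left.2 fun t ht ht' => by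
    have := hdist t ht t ht'
    rw [dist_self] at this
    linarith
  have hmem : ∀ t ∈ σ ∪ τ, b ≤ |l - t| := fun t ht => Metric.infDist_le_dist_of_mem ht
  set S : H →L[ℂ] H := A - algebraMap ℝ (H →L[ℂ] H) l with hSdef
  have hSx : ∀ x, S x = A x - (l : ℂ) • x := fun x => by
    simp [hSdef, Algebra.algebraMap_eq_smul_one]
  have hSre : ∀ x, (⟪x, S x⟫_ℂ).re = (⟪x, A x⟫_ℂ).re - l * ‖x‖ ^ 2 := fun x => by
    have : (⟪x, x⟫_ℂ).re = ‖x‖ ^ 2 := inner_self_eq_norm_sq (𝕜 := ℂ) x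
    rw [hSx, inner_sub_right, inner_smul_right, Complex.sub_re, Complex.re_ofReal_mul, this]
  have hS : IsSelfAdjoint S := hA.sub (IsSelfAdjoint.algebraMap _ (IsSelfAdjoint.all l))
  have hσm := hσ.measurableSet
  have hτm := hτ.measurableSet
  -- the off-diagonal part has vanishing quadratic form on the ranges of `E σ` and `E τ`
  have hoff : ∀ Δ, MeasurableSet Δ → E Δ * W * E Δ = 0 → ∀ x, E Δ x = x → ⟪x, W x⟫_ℂ = 0 := by
    intro Δ hΔ h0 x hx
    have h1 : ⟪E Δ x, W x⟫_ℂ = ⟪x, E Δ (W x)⟫_ℂ := (hE.isSelfAdjoint Δ hΔ).isSymmetric x (W x)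
    have h2 : E Δ (W (E Δ x)) = 0 := congrArg (fun R : H →L[ℂ] H => R x) h0
    rw [hx] at h1 h2
    rw [h1, h2, inner_zero_right]
  have hsplit : ∀ K, MeasurableSet K → ∀ x, E (σ ∩ K) x + E (τ ∩ K) x = E K x := by
    intro K hK x
    have h1 := hE.map_union (hσm.inter hK) (hτm.inter hK)
      (hdisj.mono Set.inter_subset_left Set.inter_subset_left)
    rw [← Set.union_inter_distrib_right, ← hspec,
      ← hE.map_inter _ _ (spectrum.isClosed A).measurableSet hK, hE.map_spectrum hA, one_mul] at h1
    rw [h1, add_apply]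
  -- the data shared by the two half-lines
  have hparts : ∀ K, MeasurableSet K → ∀ x,
      E (σ ∩ K) (E (σ ∩ K) x) = E (σ ∩ K) x ∧ E (τ ∩ K) (E (τ ∩ K) x) = E (τ ∩ K) x ∧
      ⟪E (σ ∩ K) x, S (E (τ ∩ K) x)⟫_ℂ = 0 ∧ ⟪E (τ ∩ K) x, S (E (σ ∩ K) x)⟫_ℂ = 0 ∧
      ⟪E (σ ∩ K) x, W (E (σ ∩ K) x)⟫_ℂ = 0 ∧ ⟪E (τ ∩ K) x, W (E (τ ∩ K) x)⟫_ℂ = 0 ∧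
      ⟪E (σ ∩ K) x, E (τ ∩ K) x⟫_ℂ = 0 := by
    intro K hK x
    have h1 := hσm.inter hK
    have h2 := hτm.inter hK
    have h3 : Disjoint (σ ∩ K) (τ ∩ K) :=
      hdisj.mono Set.inter_subset_left Set.inter_subset_left
    have hp := hE.apply_apply_of_subset h1 h1 subset_rfl x
    have hq := hE.apply_apply_of_subset h2 h2 subset_rfl x
    refine ⟨hp, hq, ?_, ?_, ?_, ?_, hE.inner_eq_zero h1 h2 h3 hp hq⟩
    · rw [hSx, inner_sub_right, inner_smul_right, hE.inner_eq_zero h1 h2 h3 hp hq,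
        hE.inner_eq_zero h1 h2 h3 hp (hE.apply_map h2 hq), mul_zero, sub_zero]
    · rw [hSx, inner_sub_right, inner_smul_right, hE.inner_eq_zero h2 h1 h3.symm hq hp,
        hE.inner_eq_zero h2 h1 h3.symm hq (hE.apply_map h1 hp), mul_zero, sub_zero]
    · exact hoff σ hσm hWσ _ (hE.apply_apply_of_subset hσm h1 Set.inter_subset_left x)
    · exact hoff τ hτm hWτ _ (hE.apply_apply_of_subset hτm h2 Set.inter_subset_left x)
  have hright : ∀ x, c * ‖E (Set.Ici l) x‖ ^ 2 ≤
      (⟪E (Set.Ici l) x, (S + W) (E (Set.Ici l) x)⟫_ℂ).re := by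
    intro x
    have hside : ∀ t ∈ σ ∪ τ, l ≤ t → l + b ≤ t := fun t ht hlt => by
      have := hmem t ht
      rw [abs_of_nonpos (by linarith)] at this
      linarith
    obtain ⟨α, β, hαβ, hασ, hβτ⟩ := exists_gap_right (σ := σ ∩ Set.Ici l) (τ := τ ∩ Set.Ici l)
      (b := b) (l := l) (fun p hp q hq => hdist p hp.1 q hq.1)
      (fun p hp => hside p (Or.inl hp.1) hp.2) (fun q hq => hside q (Or.inr hq.1) hq.2)
    obtain ⟨hp, hq, h1, h2, h3, h4, h5⟩ := hparts (Set.Ici l) measurableSet_Ici x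
    have hp' := hE.mul_le_re_inner (hσm.inter measurableSet_Ici) hασ hp
    have hq' := hE.mul_le_re_inner (hτm.inter measurableSet_Ici) hβτ hq
    rw [← hsplit _ measurableSet_Ici x]
    refine mul_le_re_inner_add_of_offDiagonal (α := α) (β := β) (by rw [hSre]; linarith)
      (by rw [hSre]; linarith) h1 h2 h3 h4 h5 ?_ ?_ ?_ <;>
    rcases hαβ with ⟨rfl, rfl⟩ | ⟨rfl, rfl⟩ <;> linarith
  have hleft : ∀ x, c * ‖E (Set.Iio l) x‖ ^ 2 ≤
      -(⟪E (Set.Iio l) x, (S + W) (E (Set.Iio l) x)⟫_ℂ).re := by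
    intro x
    have hside : ∀ t ∈ σ ∪ τ, t < l → t ≤ l - b := fun t ht hlt => by
      have := hmem t ht
      rw [abs_of_nonneg (by linarith)] at this
      linarith
    obtain ⟨α, β, hαβ, hασ, hβτ⟩ := exists_gap_left (σ := σ ∩ Set.Iio l) (τ := τ ∩ Set.Iio l)
      (b := b) (l := l) (fun p hp q hq => hdist p hp.1 q hq.1)
      (fun p hp => hside p (Or.inl hp.1) hp.2) (fun q hq => hside q (Or.inr hq.1) hq.2)
    obtain ⟨hp, hq, h1, h2, h3, h4, h5⟩ := hparts (Set.Iio l) measurableSet_Iio x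
    have hp' := hE.re_inner_le_mul (hσm.inter measurableSet_Iio) hασ hp
    have hq' := hE.re_inner_le_mul (hτm.inter measurableSet_Iio) hβτ hq
    rw [← hsplit _ measurableSet_Iio x]
    have key := mul_le_re_inner_add_of_offDiagonal (S := -S) (W := -W) (α := α) (β := β) (c := c)
      (p := E (σ ∩ Set.Iio l) x) (q := E (τ ∩ Set.Iio l) x)
      (by rw [neg_apply, inner_neg_right, Complex.neg_re, hSre]; linarith)
      (by rw [neg_apply, inner_neg_right, Complex.neg_re, hSre]; linarith)
      (by simp [h1]) (by simp [h2]) (by simp [h3]) (by simp [h4]) h5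
      (by rcases hαβ with ⟨rfl, rfl⟩ | ⟨rfl, rfl⟩ <;> linarith)
      (by rcases hαβ with ⟨rfl, rfl⟩ | ⟨rfl, rfl⟩ <;> linarith)
      (by rw [norm_neg]; rcases hαβ with ⟨rfl, rfl⟩ | ⟨rfl, rfl⟩ <;> linarith)
    rwa [← neg_add, neg_apply, inner_neg_right, Complex.neg_re] at key
  set J : H →L[ℂ] H := E (Set.Ici l) - E (Set.Iio l) with hJ
  have hdIJ : Disjoint (Set.Ici l) (Set.Iio l) :=
    Set.disjoint_left.2 fun t ht ht' => lt_irrefl t (lt_of_lt_of_le ht' ht)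
  have hsum : E (Set.Ici l) + E (Set.Iio l) = 1 := by
    rw [← hE.map_union measurableSet_Ici measurableSet_Iio hdIJ, Set.union_comm,
      Set.Iio_union_Ici, hE.map_univ]
  have hJs : IsSelfAdjoint J :=
    (hE.isSelfAdjoint _ measurableSet_Ici).sub (hE.isSelfAdjoint _ measurableSet_Iio)
  have hJJ : J * J = 1 := by
    rw [hJ, sub_mul, mul_sub, mul_sub, hE.map_inter _ _ measurableSet_Ici measurableSet_Ici,
      hE.map_inter _ _ measurableSet_Ici measurableSet_Iio,
      hE.map_inter _ _ measurableSet_Iio measurableSet_Ici,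
      hE.map_inter _ _ measurableSet_Iio measurableSet_Iio, hdIJ.inter_eq, hdIJ.symm.inter_eq,
      Set.inter_self, Set.inter_self, hE.map_empty, sub_zero, zero_sub, sub_neg_eq_add, hsum]
  have hM : IsSelfAdjoint (S + W) := hS.add hW
  have hJM : IsUnit (J * (S + W)) := by
    refine ContinuousLinearMap.isUnit_of_forall_le_norm_inner_map _ (c := ⟨c, hc0.le⟩) hc0
      fun x => ?_
    have hx : E (Set.Ici l) x + E (Set.Iio l) x = x := congrArg (fun R : H →L[ℂ] H => R x) hsum
    have hJx : J x = E (Set.Ici l) x - E (Set.Iio l) x := rfl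
    have horth : ⟪E (Set.Ici l) x, E (Set.Iio l) x⟫_ℂ = 0 :=
      hE.inner_eq_zero measurableSet_Ici measurableSet_Iio hdIJ
        (hE.apply_apply_of_subset measurableSet_Ici measurableSet_Ici subset_rfl x)
        (hE.apply_apply_of_subset measurableSet_Iio measurableSet_Iio subset_rfl x)
    have h1 : ⟪(J * (S + W)) x, x⟫_ℂ = ⟪(S + W) x, J x⟫_ℂ := hJs.isSymmetric ((S + W) x) x
    have h2 := hright x
    have h3 := hleft x
    rw [h1, hJx]
    set y := E (Set.Ici l) x
    set z := E (Set.Iio l) x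
    have hn : ‖x‖ ^ 2 = ‖y‖ ^ 2 + ‖z‖ ^ 2 := by
      rw [← hx, norm_add_sq (𝕜 := ℂ), horth]
      simp
    have hyz : ⟪(S + W) y, z⟫_ℂ = ⟪y, (S + W) z⟫_ℂ := hM.isSymmetric y z
    have hyy : ⟪(S + W) y, y⟫_ℂ = ⟪y, (S + W) y⟫_ℂ := hM.isSymmetric y y
    have hzz : ⟪(S + W) z, z⟫_ℂ = ⟪z, (S + W) z⟫_ℂ := hM.isSymmetric z z
    have hzy : (⟪(S + W) z, y⟫_ℂ).re = (⟪y, (S + W) z⟫_ℂ).re := by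
      rw [← inner_conj_symm, Complex.conj_re]
    have h4 : (⟪(S + W) x, y - z⟫_ℂ).re = (⟪y, (S + W) y⟫_ℂ).re - (⟪z, (S + W) z⟫_ℂ).re := by
      rw [← hx, map_add, inner_add_left, inner_sub_right, inner_sub_right, Complex.add_re,
        Complex.sub_re, Complex.sub_re, hyy, hzz, hyz, hzy]
      ring
    calc ‖x‖ ^ 2 * c = c * ‖y‖ ^ 2 + c * ‖z‖ ^ 2 := by rw [hn]; ring
      _ ≤ (⟪(S + W) x, y - z⟫_ℂ).re := by rw [h4]; linarith
      _ ≤ ‖⟪(S + W) x, y - z⟫_ℂ‖ := Complex.re_le_norm _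
  have hJu : IsUnit J := ⟨⟨J, J, hJJ, hJJ⟩, rfl⟩
  have hMu : IsUnit (S + W) := by
    have := hJu.mul hJM
    rwa [← mul_assoc, hJJ, one_mul] at this
  refine hl ?_
  rw [spectrum.mem_resolventSet_iff, ← IsUnit.neg_iff]
  convert hMu using 1
  rw [hSdef]
  abel

/-- Half-angle form of the shift: `δ = v tan (arctan (2 v / d) / 2)` solves `δ (δ + d) = v²`. -/
lemma mul_tan_half_arctan_mul_add {v d : ℝ} (hv : 0 ≤ v) (hd : 0 < d) :
    0 ≤ v * Real.tan (Real.arctan (2 * v / d) / 2) ∧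
      v * Real.tan (Real.arctan (2 * v / d) / 2) *
        (v * Real.tan (Real.arctan (2 * v / d) / 2) + d) = v ^ 2 := by
  have harc : 0 ≤ Real.arctan (2 * v / d) := Real.arctan_nonneg.2 (by positivity)
  have hlt := Real.arctan_lt_pi_div_two (2 * v / d)
  have ht : 0 ≤ Real.tan (Real.arctan (2 * v / d) / 2) :=
    Real.tan_nonneg_of_nonneg_of_le_pi_div_two (by linarith) (by linarith)
  have h2 : 2 * v / d = 2 * Real.tan (Real.arctan (2 * v / d) / 2) /
      (1 - Real.tan (Real.arctan (2 * v / d) / 2) ^ 2) := by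
    rw [← Real.tan_two_mul, mul_div_cancel₀ _ (two_ne_zero' ℝ), Real.tan_arctan]
  refine ⟨mul_nonneg hv ht, ?_⟩
  rcases eq_or_ne (1 - Real.tan (Real.arctan (2 * v / d) / 2) ^ 2) 0 with h0 | h0
  · rw [h0, div_zero] at h2
    simp [h2] at h0
  · rw [div_eq_div_iff hd.ne' h0] at h2
    linear_combination -(v / 2) * h2

/-- Along a norm-continuous path of self-adjoint elements whose spectra stay in the union of two
disjoint closed sets, the part of the spectrum in the first one cannot
disappear. -/
lemma spectrum_inter_nonempty_of_path {R : Type*} [CStarAlgebra R] {a : ℝ → R} (ha : Continuous a)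
    (hsa : ∀ t, IsSelfAdjoint (a t)) {F G : Set ℝ} (hF : IsClosed F) (hG : IsClosed G)
    (hFG : Disjoint F G) (hspec : ∀ t ∈ Set.Icc (0 : ℝ) 1, spectrum ℝ (a t) ⊆ F ∪ G)
    (h0 : (spectrum ℝ (a 0) ∩ F).Nonempty) : (spectrum ℝ (a 1) ∩ F).Nonempty := by
  obtain ⟨f, hfG, hfF, -⟩ := exists_continuous_zero_one_of_isClosed hG hF hFG.symm
  have hcont : Continuous fun t => cfc f (a t) :=
    ha.cfc_of_mem_nhdsSet f (s := Set.univ) Filter.univ_mem hsa f.continuous.continuousOn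
  have hidem : ∀ t ∈ Set.Icc (0 : ℝ) 1, ‖cfc f (a t)‖ = 0 ∨ ‖cfc f (a t)‖ = 1 := by
    intro t ht
    have hmul : cfc f (a t) * cfc f (a t) = cfc f (a t) := by
      rw [← cfc_mul f f (a t)]
      refine cfc_congr fun x hx => ?_
      rcases hspec t ht hx with h | h
      · simp [hfF h]
      · simp [hfG h]
    have hstar : star (cfc f (a t)) = cfc f (a t) := cfc_predicate f (a t)
    have hn := CStarRing.norm_star_mul_self (x := cfc f (a t))
    rw [hstar, hmul] at hn
    by_cases hz : ‖cfc f (a t)‖ = 0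
    · exact Or.inl hz
    · exact Or.inr (mul_left_cancel₀ hz (by rw [← hn, mul_one]))
  have hne : ‖cfc f (a 0)‖ ≠ 0 := by
    obtain ⟨x, hx, hxF⟩ := h0
    intro hz
    have h1 : (1 : ℝ) ∈ spectrum ℝ (cfc f (a 0)) := by
      rw [cfc_map_spectrum f (a 0) (hsa 0)]
      exact ⟨x, hx, hfF hxF⟩
    rw [norm_eq_zero.1 hz] at h1
    exact h1 (spectrum.mem_resolventSet_iff.2 (by simp))
  by_contra hemp
  have h1 : ‖cfc f (a 1)‖ = 0 := by
    rw [norm_eq_zero, ← cfc_zero ℝ (a 1)]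
    refine cfc_congr fun x hx => ?_
    rcases hspec 1 (by simp) hx with h | h
    · exact absurd ⟨x, hx, h⟩ hemp
    · exact hfG h
  have h0' : ‖cfc f (a 0)‖ = 1 := (hidem 0 (by simp)).resolve_left hne
  obtain ⟨t, ht, hthalf⟩ := intermediate_value_Icc' zero_le_one hcont.norm.continuousOn
    (show (1 / 2 : ℝ) ∈ Set.Icc ‖cfc f (a 1)‖ ‖cfc f (a 0)‖ by rw [h1, h0']; norm_num)
  have hthalf' : ‖cfc f (a t)‖ = 1 / 2 := hthalf
  rcases hidem t ht with h | h <;> norm_num [h] at hthalf'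

/-- **Theorem (Theorem 2.1 (ii)).** If moreover `‖V‖ < (√3/2) d` (equivalently `δ_V < d/2`),
then the spectrum of `B = A + V` in the open `d/2`-neighborhood of `σ` is separated from the
remainder of the spectrum of `B`: it coincides with the part of `spec B` in the closed
`δ_V`-neighborhood of `σ`, and it is a nonempty closed set. -/
theorem spectrum_separated_half_d_neighborhood
    {H : Type*} [NormedAddCommGroup H] [InnerProductSpace ℂ H] [CompleteSpace H]
    [TopologicalSpace.SeparableSpace H]
    (A V B : H →L[ℂ] H) (hA : IsSelfAdjoint A) (hV : IsSelfAdjoint V) (hB : B = A + V)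
    (σ Sig : Set ℝ) (hσc : IsClosed σ) (hSigc : IsClosed Sig) (hdisj : Disjoint σ Sig)
    (hspec : spectrum ℝ A = σ ∪ Sig)
    (d : ℝ) (hd : d = sInf (Set.image2 dist σ Sig)) (hd0 : 0 < d)
    (EA : Set ℝ → H →L[ℂ] H) (hEA : IsSpectralMeasure A EA)
    (hoff₁ : EA σ * V * EA σ = 0) (hoff₂ : EA Sig * V * EA Sig = 0)
    (δ : ℝ) (hδ : δ = ‖V‖ * Real.tan (Real.arctan (2 * ‖V‖ / d) / 2))
    (hnorm : ‖V‖ < Real.sqrt 3 / 2 * d) :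
    spectrum ℝ B ∩ Metric.thickening (d / 2) σ = spectrum ℝ B ∩ Metric.cthickening δ σ ∧
    (spectrum ℝ B ∩ Metric.thickening (d / 2) σ).Nonempty ∧
    IsClosed (spectrum ℝ B ∩ Metric.thickening (d / 2) σ) := by
  have hne : (Set.image2 dist σ Sig).Nonempty := by
    by_contra h
    rw [Set.not_nonempty_iff_eq_empty.1 h, Real.sInf_empty] at hd
    exact hd0.ne' hd
  obtain ⟨-, p₀, hp₀, -⟩ := hne
  have hdist : ∀ p ∈ σ, ∀ q ∈ Sig, d ≤ dist p q := fun p hp q hq => by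
    rw [hd]
    exact csInf_le ⟨0, by rintro _ ⟨a, -, b, -, rfl⟩; exact dist_nonneg⟩
      (Set.mem_image2_of_mem hp hq)
  obtain ⟨hδ0, hδv⟩ := mul_tan_half_arctan_mul_add (norm_nonneg V) hd0
  rw [← hδ] at hδ0 hδv
  have hδd : δ < d / 2 := by
    have h1 : ‖V‖ ^ 2 < 3 / 4 * d ^ 2 := by
      have h2 := pow_lt_pow_left₀ hnorm (norm_nonneg V) two_ne_zero
      rw [mul_pow, div_pow, Real.sq_sqrt (by norm_num)] at h2
      linarith
    by_contra! h
    nlinarith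
  have hsub : Metric.cthickening δ σ ⊆ Metric.thickening (d / 2) σ :=
    Metric.cthickening_subset_thickening' (by linarith) hδd σ
  have hdis : Disjoint (Metric.thickening (d / 2) σ) (Metric.cthickening δ Sig) := by
    refine Set.disjoint_left.2 fun t ht ht' => ?_
    obtain ⟨p, hp, htp⟩ := Metric.mem_thickening_iff.1 ht
    rw [hSigc.cthickening_eq_biUnion_closedBall hδ0] at ht'
    simp only [Set.mem_iUnion, Metric.mem_closedBall] at ht'
    obtain ⟨q, hq, htq⟩ := ht'
    linarith [hdist p hp q hq, dist_triangle_left p q t]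
  have hpath : ∀ t ∈ Set.Icc (0 : ℝ) 1,
      spectrum ℝ (A + t • V) ⊆ Metric.cthickening δ σ ∪ Metric.cthickening δ Sig := by
    intro t ht
    rw [← Metric.cthickening_union]
    refine spectrum_add_subset_cthickening hA ((IsSelfAdjoint.all t).smul hV) hEA hσc hSigc
      ⟨p₀, Or.inl hp₀⟩ hspec hd0 hdist ?_ ?_ hδ0 hδv ?_
    · rw [mul_smul_comm, smul_mul_assoc, hoff₁, smul_zero]
    · rw [mul_smul_comm, smul_mul_assoc, hoff₂, smul_zero]
    · rw [norm_smul, Real.norm_of_nonneg ht.1]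
      exact mul_le_of_le_one_left (norm_nonneg V) ht.2
  have hBspec : spectrum ℝ B ⊆ Metric.cthickening δ σ ∪ Metric.cthickening δ Sig := by
    simpa [hB] using hpath 1 (by simp)
  have heq : spectrum ℝ B ∩ Metric.thickening (d / 2) σ
      = spectrum ℝ B ∩ Metric.cthickening δ σ := by
    refine Set.Subset.antisymm (fun t ht => ⟨ht.1, ?_⟩) (Set.inter_subset_inter_right _ hsub)
    exact (hBspec ht.1).resolve_right (Set.disjoint_left.1 hdis ht.2)
  have hnonempty : (spectrum ℝ B ∩ Metric.cthickening δ σ).Nonempty := by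
    have h := spectrum_inter_nonempty_of_path (a := fun t : ℝ => A + t • V) (by fun_prop)
      (fun t => hA.add ((IsSelfAdjoint.all t).smul hV)) Metric.isClosed_cthickening
      Metric.isClosed_cthickening (hdis.mono_left hsub) hpath
      ⟨p₀, by simp [hspec, hp₀], Metric.self_subset_cthickening σ hp₀⟩
    simpa [hB] using h
  rw [heq]
  exact ⟨rfl, hnonempty, (spectrum.isClosed B).inter Metric.isClosed_cthickening⟩
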